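/- For every n ≥ 1, Σ_{k=0}^{n−1} A(n,k;1,1) = ∏_{k=1}^{n} (3k−2); that is, evaluating the polynomials A(n,k;u,d) at u = d = 1 and summing over k = 0, …, n−1 yields the product 1·4·7···(3n−2). -/

import Mathlib

open MvPolynomial in
/-- The polynomials `A(n,k;u,d) ∈ ℤ[u,d]` (with `u = X 0`, `d = X 1`), defined
for `n ≥ 1` and `k : ℤ` by `A(1,0) = 1`, `A(1,k) = 0` for `k ≠ 0`, and
`A(n,k) = (k+1+(n-1)d)·A(n-1,k) + (n-k+(n-1)u)·A(n-1,k-1)` for `n ≥ 2`.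
(The value at `n = 0` is irrelevant and set to `0`.) -/
noncomputable def A : ℕ → ℤ → MvPolynomial (Fin 2) ℤ
  | 0, _ => 0
  | 1, k => if k = 0 then 1 else 0
  | n + 2, k =>
      (C (k + 1) + C ((n : ℤ) + 1) * X 1) * A (n + 1) k
        + (C ((n : ℤ) + 2 - k) + C ((n : ℤ) + 1) * X 0) * A (n + 1) (k - 1)

/-!
`A(n,j)` enters row `n + 1` twice: with weight `j + 1 + n d` at `k = j` and with weight
`n - j + n u` at `k = j + 1`. The two weights add up to `n + 1 + n (u + d)`, which is independent
of `j`, so row `n + 1` sums to this multiple of the sum of row `n`.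
-/

section

open MvPolynomial

theorem A_succ {n : ℕ} (hn : 1 ≤ n) (k : ℤ) :
    A (n + 1) k =
      (C (k + 1) + C (n : ℤ) * X 1) * A n k +
        (C ((n : ℤ) + 1 - k) + C (n : ℤ) * X 0) * A n (k - 1) := by
  obtain ⟨m, rfl⟩ := Nat.exists_eq_add_of_le' hn
  rw [A, Nat.cast_succ, add_assoc (m : ℤ), one_add_one_eq_two]

theorem A_eq_zero_of_neg (n : ℕ) {k : ℤ} (hk : k < 0) : A n k = 0 := by
  induction n generalizing k with
  | zero => rfl
  | succ n ih =>
    obtain rfl | hn := n.eq_zero_or_pos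
    · exact if_neg hk.ne
    · rw [A_succ hn, ih hk, ih (by lia), mul_zero, mul_zero, add_zero]

theorem A_eq_zero_of_le {n : ℕ} {k : ℤ} (hk : n ≤ k) : A n k = 0 := by
  induction n generalizing k with
  | zero => rfl
  | succ n ih =>
    obtain rfl | hn := n.eq_zero_or_pos
    · exact if_neg (by lia)
    · rw [A_succ hn, ih (by lia), ih (by lia), mul_zero, mul_zero, add_zero]

theorem sum_A_succ {n : ℕ} (hn : 1 ≤ n) :
    ∑ k ∈ Finset.range (n + 1), A (n + 1) k =
      (C ((n : ℤ) + 1) + C (n : ℤ) * (X 0 + X 1)) * ∑ k ∈ Finset.range n, A n k := by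
  have top : A n (n : ℤ) = 0 := A_eq_zero_of_le le_rfl
  have bottom : A n ((0 : ℕ) - 1 : ℤ) = 0 := A_eq_zero_of_neg n (by lia)
  simp only [A_succ hn, Finset.sum_add_distrib]
  rw [Finset.sum_range_succ, top, mul_zero, add_zero,
    Finset.sum_range_succ', bottom, mul_zero, add_zero,
    ← Finset.sum_add_distrib, Finset.mul_sum]
  refine Finset.sum_congr rfl fun j _ => ?_
  have shift : ((j + 1 : ℕ) : ℤ) - 1 = j := by lia
  rw [shift]
  simp only [map_add, map_sub, map_one, map_natCast, Nat.cast_succ]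
  ring

theorem sum_A_one_one_general (n : ℕ) (hn : 1 ≤ n) :
    ∑ k ∈ Finset.range n, A n k =
      ∏ k ∈ Finset.Icc 1 n, (C (k : ℤ) + C ((k : ℤ) - 1) * (X 0 + X 1)) := by
  induction n, hn using Nat.le_induction with
  | base => simp [A]
  | succ n hn ih =>
    rw [sum_A_succ hn, ih, Finset.prod_Icc_succ_top (by lia), mul_comm,
      Nat.cast_succ, add_sub_cancel_right]

end

open MvPolynomial in
/-- For every `n ≥ 1`, evaluating the polynomials `A(n,k;u,d)` at `u = d = 1`
and summing over `k = 0, …, n-1` yields `∏_{k=1}^{n} (3k-2) = 1·4·7···(3n-2)`. -/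
theorem sum_A_one_one (n : ℕ) (hn : 1 ≤ n) :
    ∑ k ∈ Finset.range n, MvPolynomial.eval (fun _ => (1 : ℤ)) (A n (k : ℤ)) =
      ((∏ k ∈ Finset.Icc 1 n, (3 * k - 2) : ℕ) : ℤ) := by
  rw [← map_sum, sum_A_one_one_general n hn, map_prod, Nat.cast_prod]
  refine Finset.prod_congr rfl fun k hk => ?_
  have two_le : 2 ≤ 3 * k := by have := (Finset.mem_Icc.mp hk).1; lia
  simp only [map_add, map_sub, map_mul, eval_C, eval_X]
  push_cast [two_le]
  ring
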